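/- Let n be a positive integer, t > 0, and f : {-1,1}^n → ℝ with L₁ᵏ(f) = ∑_{|S|=k} |f̂(S)| ≤ t^k for all 1 ≤ k ≤ n. Then for every ε with |ε| ≤ 1/(2t), we have |E_ε[f] − E_0[f]| ≤ 2t · |ε|. -/

import Mathlib

open Finset

/-- The real sign `±1` associated to a Boolean, encoding `{-1,1}`. -/
noncomputable def sgn (b : Bool) : ℝ := if b then 1 else -1

/-- Fourier coefficient `f̂(S) = 2^{-n} ∑_x f(x) ∏_{i∈S} x_i` of `f : {-1,1}^n → ℝ`. -/
noncomputable def walshCoeff {n : ℕ} (f : (Fin n → Bool) → ℝ) (S : Finset (Fin n)) : ℝ :=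
  (2 ^ n : ℝ)⁻¹ * ∑ x : Fin n → Bool, f x * ∏ i ∈ S, sgn (x i)

/-- Expectation of `f` under `ε`-biased coins:
`E_ε[f] = ∑_x f(x) ∏_i (1 + ε·x_i)/2`. -/
noncomputable def biasedExp {n : ℕ} (f : (Fin n → Bool) → ℝ) (ε : ℝ) : ℝ :=
  ∑ x : Fin n → Bool, f x * ∏ i : Fin n, (1 + ε * sgn (x i)) / 2

/-!
Expanding the product density `∏ᵢ (1 + ε xᵢ) / 2` turns `E_ε[f]` into the Fourier series of `f` at
the point `(ε, …, ε)`, i.e. `∑_S ε^|S| f̂(S)`. Subtracting `E_0[f]` removes exactly the empty set,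
so grouping the rest by cardinality bounds the difference by `∑_{k ≥ 1} |ε|^k L₁ᵏ(f)`, which the
growth hypothesis compares with a geometric series of ratio `t |ε|`.
-/

section LevelDecomposition

variable {α M : Type*} [Fintype α] [AddCommMonoid M]

theorem sum_nonempty_eq_sum_Icc_sum_card_eq (g : Finset α → M) :
    ∑ S : Finset α with S.Nonempty, g S =
      ∑ k ∈ Icc 1 (Fintype.card α), ∑ S : Finset α with S.card = k, g S := by
  have card_mem : ∀ S ∈ ({S | S.Nonempty} : Finset (Finset α)),
      S.card ∈ Icc 1 (Fintype.card α) := fun S hS =>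
    mem_Icc.2 ⟨(mem_filter.1 hS).2.card_pos, S.card_le_univ⟩
  rw [← sum_fiberwise_of_maps_to card_mem]
  refine sum_congr rfl fun k hk => sum_congr ?_ fun _ _ => rfl
  ext S
  have hk_pos : 1 ≤ k := (mem_Icc.1 hk).1
  simp only [mem_filter, mem_univ, true_and, ← card_pos]
  lia

end LevelDecomposition

section GeometricSum

variable {K : Type*} [Field K] [LinearOrder K] [IsStrictOrderedRing K] {r : K}

theorem sum_Icc_one_pow_le (hr₀ : 0 ≤ r) (hr₁ : r < 1) (n : ℕ) :
    ∑ k ∈ Icc 1 n, r ^ k ≤ r / (1 - r) := by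
  simpa only [Ico_add_one_right_eq_Icc, pow_one] using
    geom_sum_Ico_le_of_lt_one (m := 1) (n := n + 1) hr₀ hr₁

theorem div_one_sub_le_two_mul (hr₀ : 0 ≤ r) (hr : r ≤ 1 / 2) :
    r / (1 - r) ≤ 2 * r := by
  rw [div_le_iff₀ (by linarith)]
  nlinarith

end GeometricSum

section FourierGrowth

variable {n : ℕ} (f : (Fin n → Bool) → ℝ)

/-- The level-`k` Fourier `ℓ₁` norm `L₁ᵏ(f)`, the weight of `|ε| ^ k` in the bound on
`E_ε[f] - E_0[f]`. -/
noncomputable def walshLevelNorm (k : ℕ) : ℝ :=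
  ∑ S : Finset (Fin n) with S.card = k, |walshCoeff f S|

theorem prod_one_add_mul_sgn_div_two (x : Fin n → Bool) (ε : ℝ) :
    ∏ i, (1 + ε * sgn (x i)) / 2 =
      ∑ S : Finset (Fin n), ε ^ S.card * ((2 ^ n : ℝ)⁻¹ * ∏ i ∈ S, sgn (x i)) := by
  simp only [prod_div_distrib, prod_one_add, prod_mul_distrib, prod_const, card_univ,
    Fintype.card_fin, powerset_univ, sum_div]
  exact sum_congr rfl fun S _ => by ring

theorem biasedExp_eq_sum_walshCoeff (ε : ℝ) :
    biasedExp f ε = ∑ S : Finset (Fin n), ε ^ S.card * walshCoeff f S := by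
  simp only [biasedExp, walshCoeff, prod_one_add_mul_sgn_div_two, mul_sum]
  rw [sum_comm]
  exact sum_congr rfl fun S _ => sum_congr rfl fun x _ => by ring

theorem biasedExp_zero : biasedExp f 0 = walshCoeff f ∅ := by
  rw [biasedExp_eq_sum_walshCoeff, sum_eq_single ∅] <;> simp +contextual

theorem biasedExp_sub_biasedExp_zero (ε : ℝ) :
    biasedExp f ε - biasedExp f 0 =
      ∑ S : Finset (Fin n) with S.Nonempty, ε ^ S.card * walshCoeff f S := by
  have nonempty_eq_erase : ({S | S.Nonempty} : Finset (Finset (Fin n))) = univ.erase ∅ := by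
    ext S
    simp [nonempty_iff_ne_empty]
  rw [biasedExp_zero, biasedExp_eq_sum_walshCoeff, nonempty_eq_erase,
    sum_erase_eq_sub (mem_univ _), card_empty, pow_zero, one_mul]

theorem abs_biasedExp_sub_biasedExp_zero_le (ε : ℝ) :
    |biasedExp f ε - biasedExp f 0| ≤ ∑ k ∈ Icc 1 n, |ε| ^ k * walshLevelNorm f k := by
  calc |biasedExp f ε - biasedExp f 0|
      ≤ ∑ S : Finset (Fin n) with S.Nonempty, |ε ^ S.card * walshCoeff f S| := by
        rw [biasedExp_sub_biasedExp_zero]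
        exact abs_sum_le_sum_abs _ _
    _ = ∑ k ∈ Icc 1 n, ∑ S : Finset (Fin n) with S.card = k, |ε ^ S.card * walshCoeff f S| := by
        rw [sum_nonempty_eq_sum_Icc_sum_card_eq, Fintype.card_fin]
    _ = ∑ k ∈ Icc 1 n, |ε| ^ k * walshLevelNorm f k := by
        refine sum_congr rfl fun k _ => ?_
        rw [walshLevelNorm, mul_sum]
        refine sum_congr rfl fun S hS => ?_
        rw [abs_mul, abs_pow, (mem_filter.1 hS).2]

variable {f}

theorem coin_of_fourier_growth_general {t : ℝ} (ht : 0 ≤ t)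
    (hgrowth : ∀ k, 1 ≤ k → k ≤ n → walshLevelNorm f k ≤ t ^ k) {ε : ℝ} (hε : t * |ε| < 1) :
    |biasedExp f ε - biasedExp f 0| ≤ t * |ε| / (1 - t * |ε|) := by
  calc |biasedExp f ε - biasedExp f 0|
      ≤ ∑ k ∈ Icc 1 n, |ε| ^ k * walshLevelNorm f k := abs_biasedExp_sub_biasedExp_zero_le f ε
    _ ≤ ∑ k ∈ Icc 1 n, (t * |ε|) ^ k := by
        refine sum_le_sum fun k hk => ?_
        obtain ⟨one_le_k, k_le_n⟩ := mem_Icc.1 hk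
        rw [mul_pow, mul_comm]
        gcongr
        exact hgrowth k one_le_k k_le_n
    _ ≤ t * |ε| / (1 - t * |ε|) := sum_Icc_one_pow_le (by positivity) hε n

end FourierGrowth

/-- folklore: if f has Fourier growth L₁ᵏ(f) ≤ tᵏ for all
1 ≤ k ≤ n, then for all |ε| ≤ 1/(2t), |E_ε[f] − E_0[f]| ≤ 2t·|ε|. -/
theorem coin_of_fourier_growth (n : ℕ) (hn : 0 < n) (t : ℝ) (ht : 0 < t)
    (f : (Fin n → Bool) → ℝ)
    (hgrowth : ∀ k : ℕ, 1 ≤ k → k ≤ n →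
      ∑ S ∈ Finset.univ.filter (fun S : Finset (Fin n) => S.card = k),
        |walshCoeff f S| ≤ t ^ k)
    (ε : ℝ) (hε : |ε| ≤ 1 / (2 * t)) :
    |biasedExp f ε - biasedExp f 0| ≤ 2 * t * |ε| := by
  have ratio_le_half : t * |ε| ≤ 1 / 2 := by
    rw [le_div_iff₀ (by positivity)] at hε
    linarith
  calc |biasedExp f ε - biasedExp f 0|
      ≤ t * |ε| / (1 - t * |ε|) :=
        coin_of_fourier_growth_general ht.le hgrowth (by linarith)
    _ ≤ 2 * (t * |ε|) := div_one_sub_le_two_mul (by positivity) ratio_le_half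
    _ = 2 * t * |ε| := (mul_assoc _ _ _).symm
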